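/- arXiv:1610.07302 — 2 statements merged into one kernel-verified Lean document; each statement's English description precedes it below -/
import Mathlib

section
/- Let a_i ≥ a_i' > 0 and 0 < b_i ≤ b_i' for i = 1,…,n. If the function x ↦ ∏_{i=1}^n sinh(a_i·x)/sinh(b_i·x) (extended by continuity at x = 0) is infinitely divisible, then the function x ↦ ∏_{i=1}^n sinh(a_i'·x)/sinh(b_i'·x) (extended by continuity at x = 0) is infinitely divisible. -/
/-!
Multiplying the first product by the factors `sinh (a' x) / sinh (a x)` and
`sinh (b x) / sinh (b' x)` gives the second one, so it suffices that `sinh (p x) / sinh (q x)` is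
infinitely divisible for `0 < p ≤ q`. By Euler's product for `sinh`, this quotient is, up to the
factor `p / q`, a pointwise limit of products of functions `(1 + α x²) / (1 + β x²)` with
`0 < α ≤ β`. Each of these equals `(α / β) (1 - ψ x)⁻¹` with `ψ x = (1 - α / β) (1 + α x²)⁻¹`. The
function `ψ` has values in `[0, 1)` and is positive definite, because `(1 + α x²)⁻¹` is the
product of `(1 ± i √α x)⁻¹`, the characteristic functions of exponential distributions and their
reflections. The expansion of `-log (1 - ψ)` in powers of `ψ` has nonnegative coefficients, which
exhibits `(1 - ψ)⁻¹` as the exponential of a positive definite function.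
-/

open scoped ComplexOrder

/-- A function `φ : ℝ → ℂ` is positive definite if for every `n`, all real numbers
`x 1, …, x n` and complex numbers `c 1, …, c n`, the sum
`∑ i j, c i * conj (c j) * φ (x i - x j)` is a nonnegative real number. -/
def IsPosDefFun (φ : ℝ → ℂ) : Prop :=
  ∀ (n : ℕ) (x : Fin n → ℝ) (c : Fin n → ℂ),
    0 ≤ ∑ i, ∑ j, c i * (starRingEnd ℂ) (c j) * φ (x i - x j)

/-- A real-valued function is infinitely divisible if every positive real power of it
is positive definite. -/
def IsInfDivFun (φ : ℝ → ℝ) : Prop :=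
  ∀ r : ℝ, 0 < r → IsPosDefFun fun x => ((φ x ^ r : ℝ) : ℂ)

/-- The function `x ↦ ∏ i, sinh (a i * x) / sinh (b i * x)`, extended by continuity
at `x = 0` (where it takes the value `∏ i, a i / b i`). -/
noncomputable def sinhProd {n : ℕ} (a b : Fin n → ℝ) (x : ℝ) : ℝ :=
  if x = 0 then ∏ i, a i / b i else ∏ i, Real.sinh (a i * x) / Real.sinh (b i * x)

open Filter Topology MeasureTheory
open scoped Real

-- Over `ℂ` the quadratic form determines the matrix, so its reality forces Hermitian symmetry.
theorem posSemidef_iff_dotProduct_mulVec_nonneg {ι : Type*} [Fintype ι]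
    {M : Matrix ι ι ℂ} : M.PosSemidef ↔ ∀ c : ι → ℂ, 0 ≤ star c ⬝ᵥ M.mulVec c := by
  classical
  refine ⟨fun hM => hM.dotProduct_mulVec_nonneg, fun h => ?_⟩
  rw [← Matrix.isPositive_toEuclideanLin_iff, LinearMap.isPositive_iff_complex]
  intro c
  have hinner : inner ℂ (Matrix.toEuclideanLin M c) c = star (star c.ofLp ⬝ᵥ M.mulVec c.ofLp) := by
    rw [EuclideanSpace.inner_eq_star_dotProduct, ← Matrix.star_dotProduct_star, star_star]
    simp [dotProduct_comm]
  rw [hinner, (IsSelfAdjoint.of_nonneg (h c.ofLp)).star_eq]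
  obtain ⟨hre, him⟩ := Complex.nonneg_iff.1 (h c.ofLp)
  exact ⟨Complex.ext rfl him, hre⟩

theorem isPosDefFun_iff_posSemidef {φ : ℝ → ℂ} :
    IsPosDefFun φ ↔
      ∀ (n : ℕ) (x : Fin n → ℝ), (Matrix.of fun i j => φ (x i - x j)).PosSemidef := by
  have hquadForm (n : ℕ) (x : Fin n → ℝ) (c : Fin n → ℂ) :
      star c ⬝ᵥ (Matrix.of fun i j => φ (x i - x j)).mulVec c =
        ∑ i, ∑ j, star c i * (starRingEnd ℂ) (star c j) * φ (x i - x j) := by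
    simp only [dotProduct, Matrix.mulVec, Matrix.of_apply, Finset.mul_sum, Pi.star_apply,
      starRingEnd_apply, star_star]
    exact Finset.sum_congr rfl fun i _ => Finset.sum_congr rfl fun j _ => by ring
  simp only [posSemidef_iff_dotProduct_mulVec_nonneg, hquadForm]
  exact forall₂_congr fun n x => (star_involutive (R := Fin n → ℂ)).surjective.forall

namespace IsPosDefFun

variable {φ ψ : ℝ → ℂ}

theorem add (hφ : IsPosDefFun φ) (hψ : IsPosDefFun ψ) : IsPosDefFun fun x => φ x + ψ x :=
  fun n x c => by
    simpa only [mul_add, Finset.sum_add_distrib] using add_nonneg (hφ n x c) (hψ n x c)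

theorem mul (hφ : IsPosDefFun φ) (hψ : IsPosDefFun ψ) : IsPosDefFun fun x => φ x * ψ x :=
  isPosDefFun_iff_posSemidef.2 fun n x =>
    (isPosDefFun_iff_posSemidef.1 hφ n x).hadamard (isPosDefFun_iff_posSemidef.1 hψ n x)

theorem of_eq_mul_conj {g : ℝ → ℂ} (h : ∀ x y, φ (x - y) = g x * (starRingEnd ℂ) (g y)) :
    IsPosDefFun φ := by
  refine isPosDefFun_iff_posSemidef.2 fun n x => ?_
  simp only [h]
  exact Matrix.posSemidef_vecMulVec_self_star fun i => g (x i)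

theorem const {c : ℝ} (hc : 0 ≤ c) : IsPosDefFun fun _ => (c : ℂ) :=
  of_eq_mul_conj (g := fun _ => (√c : ℝ)) fun _ _ => by
    rw [Complex.conj_ofReal, ← Complex.ofReal_mul, Real.mul_self_sqrt hc]

theorem cexp_mul_I (t : ℝ) : IsPosDefFun fun x => Complex.exp (t * x * Complex.I) :=
  of_eq_mul_conj (g := fun x => Complex.exp (t * x * Complex.I)) fun x y => by
    rw [← Complex.exp_conj, ← Complex.exp_add]
    simp only [map_mul, Complex.conj_ofReal, Complex.conj_I, Complex.ofReal_sub]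
    ring_nf

theorem const_mul {c : ℝ} (hc : 0 ≤ c) (hφ : IsPosDefFun φ) : IsPosDefFun fun x => c * φ x :=
  (const hc).mul hφ

theorem pow (hφ : IsPosDefFun φ) (k : ℕ) : IsPosDefFun fun x => φ x ^ k := by
  induction k with
  | zero => simpa using const zero_le_one
  | succ k ih => simpa only [pow_succ] using ih.mul hφ

theorem sum {ι : Type*} (s : Finset ι) {f : ι → ℝ → ℂ} (h : ∀ i ∈ s, IsPosDefFun (f i)) :
    IsPosDefFun fun x => ∑ i ∈ s, f i x := by
  simpa only [Finset.sum_fn] using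
    Finset.sum_induction f IsPosDefFun (fun _ _ => add) (const le_rfl) h

theorem comp_mul_left (hφ : IsPosDefFun φ) (a : ℝ) : IsPosDefFun fun x => φ (a * x) :=
  fun n x c => by simpa only [mul_sub] using hφ n (fun i => a * x i) c

theorem of_tendsto {ι : Type*} {l : Filter ι} [l.NeBot] {f : ι → ℝ → ℂ}
    (h : ∀ k, IsPosDefFun (f k)) (hf : ∀ x, Tendsto (f · x) l (𝓝 (φ x))) : IsPosDefFun φ :=
  fun n x c => ge_of_tendsto'
    (tendsto_finsetSum _ fun i _ => tendsto_finsetSum _ fun j _ =>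
      (hf (x i - x j)).const_mul (c i * (starRingEnd ℂ) (c j)))
    fun k => h k n x c

theorem of_hasSum {ι : Type*} {f : ι → ℝ → ℂ} (h : ∀ k, IsPosDefFun (f k))
    (hf : ∀ x, HasSum (f · x) (φ x)) : IsPosDefFun φ :=
  of_tendsto (fun s : Finset ι => sum s fun k _ => h k) hf

theorem integral {T : Type*} [MeasurableSpace T] {μ : Measure T} {F : T → ℝ → ℂ}
    (h : ∀ t, IsPosDefFun (F t)) (hF : ∀ x, Integrable (F · x) μ) :
    IsPosDefFun fun x => ∫ t, F t x ∂μ := fun n x c => by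
  have hterm (i j : Fin n) :
      Integrable (fun t => c i * (starRingEnd ℂ) (c j) * F t (x i - x j)) μ :=
    (hF (x i - x j)).const_mul _
  simp only [← integral_const_mul]
  simp_rw [← integral_finsetSum _ fun j _ => hterm _ j]
  rw [← integral_finsetSum _ fun i _ => integrable_finsetSum _ fun j _ => hterm i j]
  exact integral_nonneg fun t => h t n x c

theorem cexp (hφ : IsPosDefFun φ) : IsPosDefFun fun x => Complex.exp (φ x) := by
  refine of_hasSum (fun k : ℕ => const_mul (c := (k.factorial : ℝ)⁻¹) (by positivity) (hφ.pow k))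
    fun x => ?_
  simpa [Complex.exp_eq_exp_ℂ, div_eq_inv_mul] using NormedSpace.expSeries_div_hasSum_exp (φ x)

theorem neg_log_one_sub {f : ℝ → ℝ} (hf : IsPosDefFun fun x => (f x : ℂ)) (hf1 : ∀ x, |f x| < 1) :
    IsPosDefFun fun x => ((-Real.log (1 - f x) : ℝ) : ℂ) := by
  refine of_hasSum
    (fun k : ℕ => const_mul (c := ((k : ℝ) + 1)⁻¹) (by positivity) (hf.pow (k + 1))) fun x => ?_
  simpa [div_eq_inv_mul] using
    Complex.hasSum_ofReal.2 (Real.hasSum_pow_div_log_of_abs_lt_one (hf1 x))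

theorem inv_one_sub_mul_I : IsPosDefFun fun x => (1 - x * Complex.I)⁻¹ := by
  have hre (x : ℝ) : (-(1 - x * Complex.I)).re < 0 := by simp
  have hsplit (t x : ℝ) : ((Real.exp (-t) : ℝ) : ℂ) * Complex.exp (t * x * Complex.I) =
      Complex.exp (-(1 - x * Complex.I) * t) := by
    rw [Complex.ofReal_exp, ← Complex.exp_add]
    push_cast
    ring_nf
  have hlaplace (x : ℝ) : (1 - x * Complex.I)⁻¹ =
      ∫ t : ℝ in Set.Ioi 0, ((Real.exp (-t) : ℝ) : ℂ) * Complex.exp (t * x * Complex.I) := by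
    simp_rw [hsplit, integral_exp_mul_complex_Ioi (hre x)]
    simp only [Complex.ofReal_zero, mul_zero, Complex.exp_zero, neg_div_neg_eq, one_div]
  simp only [hlaplace]
  refine integral (fun t => const_mul (Real.exp_nonneg _) (cexp_mul_I t)) fun x => ?_
  simpa only [hsplit, IntegrableOn] using integrableOn_exp_mul_complex_Ioi (hre x) 0

theorem inv_one_add_mul_sq {α : ℝ} (hα : 0 ≤ α) :
    IsPosDefFun fun x => (((1 + α * x ^ 2)⁻¹ : ℝ) : ℂ) := by
  have hfactor (x : ℝ) : (((1 + α * x ^ 2)⁻¹ : ℝ) : ℂ) =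
      (1 - (√α * x : ℝ) * Complex.I)⁻¹ * (1 - (-√α * x : ℝ) * Complex.I)⁻¹ := by
    rw [← mul_inv, Complex.ofReal_inv]
    congr 1
    nth_rewrite 1 [← Real.sq_sqrt hα]
    push_cast
    linear_combination (√α : ℂ) ^ 2 * x ^ 2 * Complex.I_sq
  simp only [hfactor]
  exact (inv_one_sub_mul_I.comp_mul_left (√α)).mul (inv_one_sub_mul_I.comp_mul_left (-√α))

end IsPosDefFun

namespace IsInfDivFun

variable {f g : ℝ → ℝ}

theorem const {c : ℝ} (hc : 0 ≤ c) : IsInfDivFun fun _ => c :=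
  fun r _ => IsPosDefFun.const (Real.rpow_nonneg hc r)

theorem mul (hf : IsInfDivFun f) (hg : IsInfDivFun g) (hf0 : ∀ x, 0 ≤ f x) (hg0 : ∀ x, 0 ≤ g x) :
    IsInfDivFun fun x => f x * g x := fun r hr => by
  simp_rw [Real.mul_rpow (hf0 _) (hg0 _), Complex.ofReal_mul]
  exact (hf r hr).mul (hg r hr)

theorem prod {ι : Type*} (s : Finset ι) {f : ι → ℝ → ℝ} (h : ∀ i ∈ s, IsInfDivFun (f i))
    (h0 : ∀ i ∈ s, ∀ x, 0 ≤ f i x) : IsInfDivFun fun x => ∏ i ∈ s, f i x := by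
  have hprod := Finset.prod_induction f (fun g => IsInfDivFun g ∧ ∀ x, 0 ≤ g x)
    (fun _ _ hf hg => ⟨hf.1.mul hg.1 hf.2 hg.2, fun x => mul_nonneg (hf.2 x) (hg.2 x)⟩)
    ⟨const zero_le_one, fun _ => zero_le_one⟩ fun i hi => ⟨h i hi, h0 i hi⟩
  simpa only [Finset.prod_fn] using hprod.1

theorem of_tendsto {ι : Type*} {l : Filter ι} [l.NeBot] {F : ι → ℝ → ℝ}
    (h : ∀ k, IsInfDivFun (F k)) (hF : ∀ x, Tendsto (F · x) l (𝓝 (f x))) : IsInfDivFun f :=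
  fun r hr => IsPosDefFun.of_tendsto (fun k => h k r hr) fun x =>
    (Complex.continuous_ofReal.tendsto _).comp ((hF x).rpow_const (Or.inr hr.le))

theorem exp_of_isPosDefFun (hf : IsPosDefFun fun x => (f x : ℂ)) :
    IsInfDivFun fun x => Real.exp (f x) :=
  fun r hr => by
    simpa only [← Real.exp_mul, Complex.ofReal_exp, Complex.ofReal_mul, mul_comm] using
      (hf.const_mul hr.le).cexp

theorem inv_one_sub_of_isPosDefFun (hf : IsPosDefFun fun x => (f x : ℂ))
    (hf1 : ∀ x, |f x| < 1) : IsInfDivFun fun x => (1 - f x)⁻¹ := by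
  have hpos (x : ℝ) : 0 < 1 - f x := sub_pos.2 (abs_lt.1 (hf1 x)).2
  simpa only [Real.exp_neg, Real.exp_log (hpos _)] using exp_of_isPosDefFun (hf.neg_log_one_sub hf1)

theorem one_add_mul_sq_div {α β : ℝ} (hα : 0 < α) (hαβ : α ≤ β) :
    IsInfDivFun fun x => (1 + α * x ^ 2) / (1 + β * x ^ 2) := by
  have hβ : 0 < β := hα.trans_le hαβ
  have hq : 0 ≤ 1 - α / β := sub_nonneg.2 ((div_le_one hβ).2 hαβ)
  have hψ : IsPosDefFun fun x => (((1 - α / β) * (1 + α * x ^ 2)⁻¹ : ℝ) : ℂ) := by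
    simpa only [Complex.ofReal_mul] using (IsPosDefFun.inv_one_add_mul_sq hα.le).const_mul hq
  have hψ1 (x : ℝ) : |(1 - α / β) * (1 + α * x ^ 2)⁻¹| < 1 := by
    rw [abs_of_nonneg (by positivity)]
    exact mul_lt_one_of_nonneg_of_lt_one_left hq (sub_lt_self _ (by positivity))
      (inv_le_one_of_one_le₀ (le_add_of_nonneg_right (by positivity)))
  have hψ_pos (x : ℝ) : 0 < 1 - (1 - α / β) * (1 + α * x ^ 2)⁻¹ :=
    sub_pos.2 (abs_lt.1 (hψ1 x)).2
  have hgeom (x : ℝ) : (1 + α * x ^ 2) / (1 + β * x ^ 2) =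
      α / β * (1 - (1 - α / β) * (1 + α * x ^ 2)⁻¹)⁻¹ := by
    rw [eq_mul_inv_iff_mul_eq₀ (hψ_pos x).ne']
    field_simp
    ring
  simp only [hgeom]
  exact (const (by positivity)).mul (inv_one_sub_of_isPosDefFun hψ hψ1)
    (fun _ => by positivity) fun x => (inv_pos.2 (hψ_pos x)).le

end IsInfDivFun

/-- The hyperbolic analogue of `Real.sinc`: the function `sinh x / x`, extended by continuity
at `x = 0`. It carries the nontrivial part of the quotients in `sinhProd`, whose value at `0` it
normalizes to `1`. -/
noncomputable def sinhc (x : ℝ) : ℝ := if x = 0 then 1 else Real.sinh x / x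

theorem sinhc_zero : sinhc 0 = 1 := if_pos rfl

theorem sinhc_of_ne_zero {x : ℝ} (hx : x ≠ 0) : sinhc x = Real.sinh x / x := if_neg hx

theorem mul_sinhc (x : ℝ) : x * sinhc x = Real.sinh x := by
  rcases eq_or_ne x 0 with rfl | hx
  · simp
  · rw [sinhc_of_ne_zero hx, mul_div_cancel₀ _ hx]

theorem sinhc_pos (x : ℝ) : 0 < sinhc x := by
  rcases lt_trichotomy x 0 with hx | rfl | hx
  · rw [sinhc_of_ne_zero hx.ne]
    exact div_pos_of_neg_of_neg (Real.sinh_neg_iff.2 hx) hx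
  · rw [sinhc_zero]
    exact one_pos
  · rw [sinhc_of_ne_zero hx.ne']
    exact div_pos (Real.sinh_pos_iff.2 hx) hx

theorem tendsto_euler_sinhc_prod (x : ℝ) :
    Tendsto (fun n : ℕ => ∏ j ∈ Finset.range n, (1 + x ^ 2 / (π * (j + 1)) ^ 2)) atTop
      (𝓝 (sinhc x)) := by
  rcases eq_or_ne x 0 with rfl | hx
  · simp [sinhc_zero]
  have hπ : (π : ℂ) ≠ 0 := Complex.ofReal_ne_zero.2 Real.pi_ne_zero
  have hz : x * Complex.I / π ≠ 0 := by simp [hx, hπ]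
  have hlim := tendsto_euler_sin_prod' hz
  rw [mul_div_cancel₀ _ hπ, Complex.sin_mul_I, mul_div_mul_right _ _ Complex.I_ne_zero] at hlim
  rw [sinhc_of_ne_zero hx, ← tendsto_ofReal_iff]
  push_cast
  refine hlim.congr fun n => Finset.prod_congr rfl fun j _ => ?_
  rw [sineTerm, div_pow, mul_pow, Complex.I_sq]
  field_simp

theorem isInfDivFun_sinhc_div_sinhc {a b : ℝ} (ha : 0 < a) (hab : a ≤ b) :
    IsInfDivFun fun x => sinhc (a * x) / sinhc (b * x) := by
  have hb : 0 < b := ha.trans_le hab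
  refine IsInfDivFun.of_tendsto (l := atTop) (fun n : ℕ => IsInfDivFun.prod (Finset.range n)
    (fun j _ => IsInfDivFun.one_add_mul_sq_div (α := (a / (π * (j + 1))) ^ 2)
      (β := (b / (π * (j + 1))) ^ 2) (by positivity) (by gcongr))
    fun j _ x => by positivity) fun x => ?_
  simpa only [Pi.div_def, ← Finset.prod_div_distrib, mul_pow, div_pow, div_mul_eq_mul_div] using!
    (tendsto_euler_sinhc_prod (a * x)).div (tendsto_euler_sinhc_prod (b * x)) (sinhc_pos _).ne'

section sinhProd

variable {n : ℕ} {a b : Fin n → ℝ}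

theorem sinhProd_eq_prod_sinhc (a b : Fin n → ℝ) (x : ℝ) :
    sinhProd a b x = ∏ i, a i / b i * (sinhc (a i * x) / sinhc (b i * x)) := by
  rcases eq_or_ne x 0 with rfl | hx
  · simp [sinhProd, sinhc_zero]
  · simp only [sinhProd, hx, if_false, ← mul_sinhc]
    refine Finset.prod_congr rfl fun i _ => ?_
    rw [mul_div_mul_comm, mul_div_mul_right _ _ hx]

theorem sinhProd_nonneg (ha : ∀ i, 0 ≤ a i) (hb : ∀ i, 0 ≤ b i) (x : ℝ) :
    0 ≤ sinhProd a b x := by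
  rw [sinhProd_eq_prod_sinhc]
  exact Finset.prod_nonneg fun i _ =>
    mul_nonneg (div_nonneg (ha i) (hb i)) (div_pos (sinhc_pos _) (sinhc_pos _)).le

theorem sinhProd_mul_sinhProd (a c : Fin n → ℝ) (hb : ∀ i, b i ≠ 0) (x : ℝ) :
    sinhProd a b x * sinhProd b c x = sinhProd a c x := by
  simp only [sinhProd_eq_prod_sinhc, ← Finset.prod_mul_distrib]
  refine Finset.prod_congr rfl fun i _ => ?_
  rw [mul_mul_mul_comm, div_mul_div_cancel₀ (hb i), div_mul_div_cancel₀ (sinhc_pos _).ne']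

theorem isInfDivFun_sinhProd_of_le (ha : ∀ i, 0 < a i) (hab : ∀ i, a i ≤ b i) :
    IsInfDivFun (sinhProd a b) := by
  have hab0 (i : Fin n) : 0 < a i / b i := div_pos (ha i) ((ha i).trans_le (hab i))
  have hsinhc (i : Fin n) (x : ℝ) : 0 ≤ sinhc (a i * x) / sinhc (b i * x) :=
    (div_pos (sinhc_pos _) (sinhc_pos _)).le
  rw [funext (sinhProd_eq_prod_sinhc a b)]
  exact IsInfDivFun.prod _
    (fun i _ => (IsInfDivFun.const (hab0 i).le).mul (isInfDivFun_sinhc_div_sinhc (ha i) (hab i))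
      (fun _ => (hab0 i).le) (hsinhc i))
    fun i _ x => mul_nonneg (hab0 i).le (hsinhc i x)

end sinhProd

theorem sinhProd_infdiv_mono {n : ℕ} (a a' b b' : Fin n → ℝ)
    (ha' : ∀ i, 0 < a' i) (haa' : ∀ i, a' i ≤ a i)
    (hb : ∀ i, 0 < b i) (hbb' : ∀ i, b i ≤ b' i)
    (h : IsInfDivFun (sinhProd a b)) :
    IsInfDivFun (sinhProd a' b') := by
  have ha (i : Fin n) : 0 < a i := (ha' i).trans_le (haa' i)
  have hb' (i : Fin n) : 0 < b' i := (hb i).trans_le (hbb' i)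
  have hfactor (x : ℝ) :
      sinhProd a' b' x = sinhProd a' a x * sinhProd a b x * sinhProd b b' x := by
    rw [sinhProd_mul_sinhProd _ _ fun i => (ha i).ne',
      sinhProd_mul_sinhProd _ _ fun i => (hb i).ne']
  have ha'a_nonneg := sinhProd_nonneg (fun i => (ha' i).le) fun i => (ha i).le
  have hab_nonneg := sinhProd_nonneg (fun i => (ha i).le) fun i => (hb i).le
  have hbb'_nonneg := sinhProd_nonneg (fun i => (hb i).le) fun i => (hb' i).le
  rw [funext hfactor]
  exact ((isInfDivFun_sinhProd_of_le ha' haa').mul h ha'a_nonneg hab_nonneg).mul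
    (isInfDivFun_sinhProd_of_le hb hbb')
    (fun x => mul_nonneg (ha'a_nonneg x) (hab_nonneg x)) hbb'_nonneg
end

section
/- Let a_1,…,a_n and b_1,…,b_n be positive real numbers such that (a_1,…,a_n) is weakly submajorized by (b_1,…,b_n). Then the function x ↦ ∏_{i=1}^n sinh(a_i·x)/sinh(b_i·x) (extended by continuity at x = 0) is infinitely divisible. -/
open scoped ComplexOrder

/-- `a` is weakly submajorized by `b`: after rearranging both tuples in decreasing
order, every partial sum of `a` is at most the corresponding partial sum of `b`. -/
def IsWeaklySubmajorizedBy {n : ℕ} (a b : Fin n → ℝ) : Prop :=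
  ∃ σ τ : Equiv.Perm (Fin n),
    (∀ i j : Fin n, i ≤ j → a (σ j) ≤ a (σ i)) ∧
    (∀ i j : Fin n, i ≤ j → b (τ j) ≤ b (τ i)) ∧
    ∀ k : Fin n, ∑ i ∈ Finset.Iic k, a (σ i) ≤ ∑ i ∈ Finset.Iic k, b (τ i)

open Filter Finset MeasureTheory Set Topology

/-!
Write `sinhProd a b` as `∏ k, S (a k) / S (b k)` with `S t x = sinh (t * x) / x`. By Schoenberg's
theorem it suffices that the matrices `log (sinhProd a b (x i - x j))` are nonnegative on vectors
`c` with `∑ i, c i = 0`, which is the inequality `∑ k, E (a k) ≤ ∑ k, E (b k)` for the energy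
`E t = -∑ i, ∑ j, c i * c j * log (S t (x i - x j))`.

Since `∂²(-log S)/∂t² = S⁻²`, the second derivative of `E` is the quadratic form of the matrix
`S t (x i - x j) ^ (-2)`. Euler's product for `sinh` exhibits `S⁻¹` as a limit of products of Cauchy
kernels, which are positive definite, so by the Schur product theorem `E` is convex. Moreover
`dE/dt` tends to `0` as `t → 0⁺`, because `∑ i, c i = 0` cancels the singular part `t⁻¹` of the
logarithmic derivative of `S`. Hence `E` is also increasing, and the Tomić–Weyl inequality for weak
submajorization applies.
-/

section PosSemidef

variable {ι 𝕜 : Type*} [RCLike 𝕜]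

theorem posSemidef_of_tendsto {α : Type*} {l : Filter α} [l.NeBot] {M : α → Matrix ι ι 𝕜}
    {L : Matrix ι ι 𝕜} (hM : ∀ n, (M n).PosSemidef)
    (hL : ∀ i j, Tendsto (fun n => M n i j) l (𝓝 (L i j))) : L.PosSemidef := by
  refine ⟨Matrix.IsHermitian.ext fun i j => tendsto_nhds_unique (hL j i).star ?_, fun c => ?_⟩
  · simpa only [(hM _).isHermitian.apply i j] using hL i j
  · exact ge_of_tendsto' (tendsto_finsetSum _ fun i _ => tendsto_finsetSum _ fun j _ =>
      ((hL i j).const_mul (star (c i))).mul_const (c j)) fun n => (hM n).2 c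

theorem posSemidef_integral {α : Type*} [MeasurableSpace α] {μ : Measure α}
    {M : α → Matrix ι ι 𝕜} (hM : ∀ t, (M t).PosSemidef)
    (hMint : ∀ i j, Integrable (fun t => M t i j) μ) :
    (Matrix.of fun i j => ∫ t, M t i j ∂μ).PosSemidef := by
  refine ⟨Matrix.IsHermitian.ext fun i j => ?_, fun c => ?_⟩
  · simp only [Matrix.of_apply, RCLike.star_def, ← integral_conj]
    exact integral_congr_ae (.of_forall fun t => (hM t).isHermitian.apply i j)
  have integrable_entry (i j : ι) : Integrable (fun t => star (c i) * M t i j * c j) μ :=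
    ((hMint i j).const_mul _).mul_const _
  calc 0 ≤ ∫ t, ∑ i ∈ c.support, ∑ j ∈ c.support, star (c i) * M t i j * c j ∂μ :=
        integral_nonneg fun t => (hM t).2 c
    _ = ∑ i ∈ c.support, ∑ j ∈ c.support, star (c i) * (∫ t, M t i j ∂μ) * c j := by
      rw [integral_finsetSum _ fun i _ => integrable_finsetSum _ fun j _ => integrable_entry i j]
      simp only [integral_finsetSum _ fun j _ => integrable_entry _ j, integral_const_mul,
        integral_mul_const]

theorem posSemidef_of_prod {κ : Type*} (s : Finset κ) {M : κ → Matrix ι ι 𝕜}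
    (hM : ∀ k ∈ s, (M k).PosSemidef) : (Matrix.of fun i j => ∏ k ∈ s, M k i j).PosSemidef := by
  classical
  induction s using Finset.induction_on with
  | empty =>
    refine ⟨Matrix.IsHermitian.ext fun i j => by simp, fun c => ?_⟩
    simpa [Finsupp.sum, ← mul_sum, ← sum_mul, ← map_sum] using
      star_mul_self_nonneg (∑ i ∈ c.support, c i)
  | insert k s hk ih =>
    simp only [prod_insert hk]
    exact (hM k (mem_insert_self k s)).hadamard (ih fun l hl => hM l (mem_insert_of_mem hl))

theorem posSemidef_map_exp {M : Matrix ι ι ℝ} (hM : M.PosSemidef) :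
    (M.map Real.exp).PosSemidef := by
  have posSemidef_pow (k : ℕ) : (Matrix.of fun i j => M i j ^ k).PosSemidef := by
    simpa only [prod_const, card_range] using posSemidef_of_prod (range k) fun _ _ => hM
  refine posSemidef_of_tendsto (l := atTop)
    (M := fun n : ℕ => ∑ k ∈ range n, (k.factorial : ℝ)⁻¹ • Matrix.of fun i j => M i j ^ k)
    (fun n => Matrix.posSemidef_sum _ fun k _ => (posSemidef_pow k).smul (by positivity))
    fun i j => ?_
  simpa [Matrix.sum_apply, div_eq_inv_mul, ← congrFun Real.exp_eq_exp_ℝ (M i j)] using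
    (NormedSpace.expSeries_div_hasSum_exp (M i j)).tendsto_sum_nat

open scoped MatrixOrder Matrix.Norms.L2Operator in
theorem posSemidef_map_ofReal [Finite ι] {M : Matrix ι ι ℝ} (hM : M.PosSemidef) :
    (M.map ((↑) : ℝ → 𝕜)).PosSemidef := by
  classical
  have := Fintype.ofFinite ι
  obtain ⟨B, rfl⟩ := CStarAlgebra.nonneg_iff_eq_star_mul_self.1 hM.nonneg
  convert! Matrix.posSemidef_conjTranspose_mul_self (B.map ((↑) : ℝ → 𝕜))
  ext i j
  simp [Matrix.mul_apply]

theorem posSemidef_iff_isSymm_and_sum_mul_nonneg [Fintype ι] {M : Matrix ι ι ℝ} :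
    M.PosSemidef ↔ M.IsSymm ∧ ∀ c : ι → ℝ, 0 ≤ ∑ i, ∑ j, c i * c j * M i j := by
  have dotProduct_eq (c : ι → ℝ) :
      star c ⬝ᵥ M.mulVec c = ∑ i, ∑ j, c i * c j * M i j := by
    simp only [dotProduct, Matrix.mulVec, mul_sum, star_trivial, mul_left_comm, mul_comm]
  rw [Matrix.posSemidef_iff_dotProduct_mulVec, Matrix.isHermitian_iff_isSymm]
  simp only [dotProduct_eq]

end PosSemidef

/-- A real symmetric matrix is conditionally positive semidefinite if its quadratic form is
nonnegative on the vectors whose coordinates sum to zero. By Schoenberg's theorem these are the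
matrices all of whose positive multiples have a positive semidefinite entrywise exponential. -/
def IsCondPosSemidef {ι : Type*} [Fintype ι] (M : Matrix ι ι ℝ) : Prop :=
  M.IsSymm ∧ ∀ c : ι → ℝ, ∑ i, c i = 0 → 0 ≤ ∑ i, ∑ j, c i * c j * M i j

namespace IsCondPosSemidef

variable {ι : Type*} [Fintype ι] {M : Matrix ι ι ℝ}

theorem smul (hM : IsCondPosSemidef M) {r : ℝ} (hr : 0 ≤ r) : IsCondPosSemidef (r • M) := by
  refine ⟨hM.1.smul r, fun c hc => ?_⟩
  simpa [mul_sum, mul_left_comm] using mul_nonneg hr (hM.2 c hc)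

theorem posSemidef_sub_sub_add (hM : IsCondPosSemidef M) (o : ι) :
    (Matrix.of fun i j => M i j - M i o - M o j + M o o).PosSemidef := by
  classical
  have symm := hM.1.apply
  refine posSemidef_iff_isSymm_and_sum_mul_nonneg.2 ⟨Matrix.IsSymm.ext fun i j => ?_, fun c => ?_⟩
  · simp only [Matrix.of_apply, symm i j, symm i o, symm o j]
    ring
  -- Moving the total mass of `c` to the point `o` makes the coordinate sum vanish.
  have h := hM.2 (c - Pi.single o (∑ i, c i)) (by simp)
  convert! h using 1
  simp only [Matrix.of_apply, Pi.sub_apply, Pi.single_apply, mul_add, mul_sub, sub_mul,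
    sum_add_distrib, sum_sub_distrib, ite_mul, mul_ite, zero_mul, mul_zero, sum_ite_irrel,
    sum_const_zero, sum_ite_eq', Finset.mem_univ, if_true]
  simp only [mul_assoc, ← mul_sum, ← sum_mul, mul_left_comm _ (∑ i, c i)]
  ring

/-- One direction of **Schoenberg's theorem**. -/
protected theorem posSemidef_map_exp (hM : IsCondPosSemidef M) : (M.map Real.exp).PosSemidef := by
  rcases isEmpty_or_nonempty ι with _ | ⟨⟨o⟩⟩
  · exact posSemidef_iff_isSymm_and_sum_mul_nonneg.2 ⟨Subsingleton.elim _ _, by simp⟩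
  set v : ι → ℝ := fun i => Real.exp (M i o - M o o / 2)
  convert! (Matrix.posSemidef_vecMulVec_self_star v).hadamard
    (posSemidef_map_exp (hM.posSemidef_sub_sub_add o))
  ext i j
  simp only [Matrix.map_apply, Matrix.hadamard_apply, Matrix.vecMulVec_apply, Matrix.of_apply,
    star_trivial, v, ← Real.exp_add, hM.1.apply o j]
  ring_nf

end IsCondPosSemidef

theorem isPosDefFun_of_posSemidef {φ : ℝ → ℂ}
    (hφ : ∀ (n : ℕ) (x : Fin n → ℝ), (Matrix.of fun i j => φ (x i - x j)).PosSemidef) :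
    IsPosDefFun φ := by
  intro n x c
  convert! (hφ n x).dotProduct_mulVec_nonneg (star c) using 1
  simp [dotProduct, Matrix.mulVec, mul_sum, mul_left_comm, mul_comm]

theorem isInfDivFun_of_isCondPosSemidef_log {φ : ℝ → ℝ} (hpos : ∀ x, 0 < φ x)
    (hφ : ∀ (n : ℕ) (x : Fin n → ℝ),
      IsCondPosSemidef (Matrix.of fun i j => Real.log (φ (x i - x j)))) :
    IsInfDivFun φ := by
  intro r hr
  refine isPosDefFun_of_posSemidef fun n x => ?_
  convert! posSemidef_map_ofReal (𝕜 := ℂ) ((hφ n x).smul hr.le).posSemidef_map_exp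
  ext i j
  simp [Real.rpow_def_of_pos (hpos _), mul_comm]

theorem rightDeriv_mul_sub_le_sub_of_convexOn {s : Set ℝ} {f : ℝ → ℝ} (hf : ConvexOn ℝ s f)
    {x y : ℝ} (hx : x ∈ interior s) (hy : y ∈ s) :
    derivWithin f (Ioi x) x * (y - x) ≤ f y - f x := by
  rcases lt_trichotomy x y with hxy | rfl | hyx
  · rw [← le_div_iff₀ (sub_pos.2 hxy), ← slope_def_field]
    exact hf.rightDeriv_le_slope_of_mem_interior hx hy hxy
  · simp
  · rw [← neg_sub x y, mul_neg, neg_le, neg_sub, ← div_le_iff₀ (sub_pos.2 hyx), ← slope_def_field]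
    exact (hf.slope_le_leftDeriv_of_mem_interior hy hx hyx).trans
      (hf.leftDeriv_le_rightDeriv_of_mem_interior hx)

theorem rightDeriv_nonneg_of_convexOn_of_monotoneOn {s : Set ℝ} {f : ℝ → ℝ} (hf : ConvexOn ℝ s f)
    (hmono : MonotoneOn f s) {x : ℝ} (hx : x ∈ interior s) : 0 ≤ derivWithin f (Ioi x) x := by
  rw [hf.rightDeriv_eq_sInf_slope_of_mem_interior hx]
  refine Real.sInf_nonneg ?_
  rintro _ ⟨y, ⟨hy, -⟩, rfl⟩
  exact hmono.slope_nonneg (interior_subset hx) hy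

theorem mul_sum_le_sum_mul_of_antitone {R : Type*} [CommRing R] [LinearOrder R]
    [IsStrictOrderedRing R] {n : ℕ} {w δ : Fin n → R} {m : R} (hw : Antitone w)
    (hm : ∀ i, m ≤ w i) (hδ : ∀ k, 0 ≤ ∑ i ∈ Finset.Iic k, δ i) :
    m * ∑ i, δ i ≤ ∑ i, w i * δ i := by
  induction n generalizing m with
  | zero => simp
  | succ n ih =>
    have hsum : 0 ≤ ∑ i, δ i := by
      simpa only [← Fin.top_eq_last, Finset.Iic_top] using hδ (Fin.last n)
    have castSucc_le : w (Fin.last n) * ∑ i : Fin n, δ i.castSucc ≤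
        ∑ i : Fin n, w i.castSucc * δ i.castSucc :=
      ih (hw.comp_monotone Fin.strictMono_castSucc.monotone) (fun i => hw (Fin.le_last _))
        fun k => by simpa only [Fin.sum_Iic_castSucc] using hδ k.castSucc
    calc m * ∑ i, δ i ≤ w (Fin.last n) * ∑ i, δ i := mul_le_mul_of_nonneg_right (hm _) hsum
      _ ≤ ∑ i, w i * δ i := by
        rw [Fin.sum_univ_castSucc, Fin.sum_univ_castSucc, mul_add]
        gcongr

/-- The **Tomić–Weyl inequality**. -/
theorem IsWeaklySubmajorizedBy.sum_le_sum {n : ℕ} {a b : Fin n → ℝ}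
    (hab : IsWeaklySubmajorizedBy a b) {s : Set ℝ} (ha : ∀ i, a i ∈ interior s)
    (hb : ∀ i, b i ∈ s) {f : ℝ → ℝ} (hf : ConvexOn ℝ s f) (hmono : MonotoneOn f s) :
    ∑ i, f (a i) ≤ ∑ i, f (b i) := by
  obtain ⟨σ, τ, hσ, -, hsum⟩ := hab
  set w : Fin n → ℝ := fun i => derivWithin f (Ioi (a (σ i))) (a (σ i))
  have hw : Antitone w := fun i j hij => hf.monotoneOn_rightDeriv (ha _) (ha _) (hσ i j hij)
  have hw_nonneg (i : Fin n) : 0 ≤ w i :=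
    rightDeriv_nonneg_of_convexOn_of_monotoneOn hf hmono (ha _)
  rw [← Equiv.sum_comp σ, ← Equiv.sum_comp τ fun i => f (b i), ← sub_nonneg, ← sum_sub_distrib]
  calc 0 ≤ ∑ i, w i * (b (τ i) - a (σ i)) := by
        simpa using mul_sum_le_sum_mul_of_antitone (δ := fun i => b (τ i) - a (σ i)) hw hw_nonneg
          fun k => by simpa only [sum_sub_distrib, sub_nonneg] using hsum k
    _ ≤ ∑ i, (f (b (τ i)) - f (a (σ i))) :=
        Finset.sum_le_sum fun i _ => rightDeriv_mul_sub_le_sub_of_convexOn hf (ha _) (hb _)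

theorem integrableOn_exp_neg_mul_cos (d : ℝ) :
    IntegrableOn (fun t => Real.exp (-t) * Real.cos (t * d)) (Ioi 0) := by
  refine (integrableOn_exp_neg_Ioi 0).mul_bdd (c := 1) (by fun_prop) (.of_forall fun t => ?_)
  exact Real.abs_cos_le_one _

theorem integral_exp_neg_mul_cos (d : ℝ) :
    ∫ t in Ioi (0 : ℝ), Real.exp (-t) * Real.cos (t * d) = (1 + d ^ 2)⁻¹ := by
  have hre : (-1 + d * Complex.I : ℂ).re < 0 := by simp
  have exp_mul_cos_eq_re (t : ℝ) : Real.exp (-t) * Real.cos (t * d) =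
      RCLike.re (Complex.exp ((-1 + d * Complex.I) * t)) := by
    simp [Complex.exp_re, mul_comm]
  simp only [exp_mul_cos_eq_re]
  rw [integral_re (integrableOn_exp_mul_complex_Ioi hre 0), integral_exp_mul_complex_Ioi hre]
  simp [Complex.normSq_apply, Complex.div_re]
  field_simp

section DifferenceKernel

variable {ι : Type*} [Finite ι] (x : ι → ℝ)

theorem posSemidef_cos_sub : (Matrix.of fun i j => Real.cos (x i - x j)).PosSemidef := by
  convert! (Matrix.posSemidef_vecMulVec_self_star (Real.cos ∘ x)).add
    (Matrix.posSemidef_vecMulVec_self_star (Real.sin ∘ x))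
  ext i j
  simp [Matrix.vecMulVec_apply, Real.cos_sub]

theorem posSemidef_inv_one_add_sub_sq :
    (Matrix.of fun i j => (1 + (x i - x j) ^ 2)⁻¹).PosSemidef := by
  simp only [← integral_exp_neg_mul_cos]
  refine posSemidef_integral
    (M := fun t => Real.exp (-t) • Matrix.of fun i j => Real.cos (t * (x i - x j)))
    (fun t => ?_) fun i j => integrableOn_exp_neg_mul_cos _
  simpa only [mul_sub] using (posSemidef_cos_sub fun i => t * x i).smul (Real.exp_pos (-t)).le

end DifferenceKernel

theorem tendsto_euler_sinh_prod (x : ℝ) :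
    Tendsto (fun n : ℕ => x * ∏ j ∈ range n, (1 + (x / (Real.pi * (j + 1))) ^ 2)) atTop
      (𝓝 (Real.sinh x)) := by
  have hpi : (Real.pi : ℂ) ≠ 0 := Complex.ofReal_ne_zero.2 Real.pi_ne_zero
  have factor (j : ℕ) : 1 - (x * Complex.I / Real.pi) ^ 2 / ((j : ℂ) + 1) ^ 2 =
      1 + (x / (Real.pi * ((j : ℂ) + 1))) ^ 2 := by
    have : (j : ℂ) + 1 ≠ 0 := j.cast_add_one_ne_zero
    field_simp
    rw [Complex.I_sq]
    ring
  have h := (Complex.tendsto_euler_sin_prod (x * Complex.I / Real.pi)).div_const Complex.I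
  simp only [mul_div_cancel₀ _ hpi, Complex.sin_mul_I, factor,
    mul_div_cancel_right₀ _ Complex.I_ne_zero, mul_right_comm _ Complex.I] at h
  rw [← Filter.tendsto_ofReal_iff]
  exact_mod_cast h

/-- The function `x ↦ sinh (b * x) / x`, extended by continuity at `x = 0`. It splits the ratio
`sinh (a * x) / sinh (b * x)` into factors depending on `a` and on `b` alone, and it is smooth in
`b` for every fixed `x`, including `x = 0`. -/
noncomputable def sinhDiv (b x : ℝ) : ℝ := if x = 0 then b else Real.sinh (b * x) / x

theorem sinhDiv_mul (b x : ℝ) : sinhDiv b x * x = Real.sinh (b * x) := by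
  rcases eq_or_ne x 0 with rfl | hx
  · simp
  · rw [sinhDiv, if_neg hx, div_mul_cancel₀ _ hx]

theorem sinhDiv_neg (b x : ℝ) : sinhDiv b (-x) = sinhDiv b x := by
  simp [sinhDiv]

theorem sinhDiv_zero_left (x : ℝ) : sinhDiv 0 x = 0 := by
  simp [sinhDiv]

theorem hasDerivAt_sinhDiv (b x : ℝ) :
    HasDerivAt (fun b => sinhDiv b x) (Real.cosh (b * x)) b := by
  rcases eq_or_ne x 0 with rfl | hx
  · simpa [sinhDiv] using hasDerivAt_id' b
  · simpa [sinhDiv, hx] using (((hasDerivAt_id' b).mul_const x).sinh).div_const x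

theorem exists_sinhDiv_eq_mul_cosh {b : ℝ} (hb : 0 < b) (x : ℝ) :
    ∃ ξ ∈ Ioo 0 b, sinhDiv b x = b * Real.cosh (ξ * x) := by
  obtain ⟨ξ, hξ, h⟩ := exists_hasDerivAt_eq_slope (fun b => sinhDiv b x)
    (fun b => Real.cosh (b * x)) hb
    (fun t _ => (hasDerivAt_sinhDiv t x).continuousAt.continuousWithinAt)
    fun t _ => hasDerivAt_sinhDiv t x
  refine ⟨ξ, hξ, ?_⟩
  rw [h, sinhDiv_zero_left, sub_zero, sub_zero, mul_div_cancel₀ _ hb.ne']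

theorem le_sinhDiv {b : ℝ} (hb : 0 < b) (x : ℝ) : b ≤ sinhDiv b x := by
  obtain ⟨ξ, -, h⟩ := exists_sinhDiv_eq_mul_cosh hb x
  rw [h]
  exact le_mul_of_one_le_right hb.le (Real.one_le_cosh _)

theorem sinhDiv_pos {b : ℝ} (hb : 0 < b) (x : ℝ) : 0 < sinhDiv b x :=
  hb.trans_le (le_sinhDiv hb x)

theorem sinhDiv_le_mul_cosh {b : ℝ} (hb : 0 < b) (x : ℝ) :
    sinhDiv b x ≤ b * Real.cosh (b * x) := by
  obtain ⟨ξ, ⟨hξ, hξb⟩, h⟩ := exists_sinhDiv_eq_mul_cosh hb x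
  rw [h]
  gcongr
  rw [Real.cosh_le_cosh, abs_mul, abs_mul, abs_of_pos hξ, abs_of_pos hb]
  gcongr

theorem tendsto_sinhDiv_prod (b x : ℝ) :
    Tendsto (fun n : ℕ => b * ∏ j ∈ range n, (1 + (b * x / (Real.pi * (j + 1))) ^ 2)) atTop
      (𝓝 (sinhDiv b x)) := by
  rcases eq_or_ne x 0 with rfl | hx
  · simp [sinhDiv]
  · simpa only [sinhDiv, if_neg hx, mul_right_comm b x, mul_div_cancel_right₀ _ hx] using
      (tendsto_euler_sinh_prod (b * x)).div_const x

theorem hasDerivAt_log_sinhDiv {b : ℝ} (hb : 0 < b) (x : ℝ) :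
    HasDerivAt (fun b => Real.log (sinhDiv b x)) (Real.cosh (b * x) / sinhDiv b x) b :=
  (hasDerivAt_sinhDiv b x).log (sinhDiv_pos hb x).ne'

theorem hasDerivAt_cosh_div_sinhDiv {b : ℝ} (hb : 0 < b) (x : ℝ) :
    HasDerivAt (fun b => Real.cosh (b * x) / sinhDiv b x) (-(sinhDiv b x)⁻¹ ^ 2) b := by
  refine (((hasDerivAt_id' b).mul_const x).cosh.fun_div (hasDerivAt_sinhDiv b x)
    (sinhDiv_pos hb x).ne').congr_deriv ?_
  have numerator_eq : Real.sinh (b * x) * (1 * x) * sinhDiv b x -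
      Real.cosh (b * x) * Real.cosh (b * x) = -1 := by
    linear_combination Real.sinh (b * x) * sinhDiv_mul b x - Real.cosh_sq (b * x)
  rw [numerator_eq, inv_pow, neg_div, one_div]

theorem tendsto_cosh_div_sinhDiv_sub_inv (x : ℝ) :
    Tendsto (fun b => Real.cosh (b * x) / sinhDiv b x - b⁻¹) (𝓝[>] 0) (𝓝 0) := by
  have cosh_slope : Tendsto (fun b : ℝ => b⁻¹ * (Real.cosh (b * x) - 1)) (𝓝[>] 0) (𝓝 0) := by
    simpa using ((hasDerivAt_id' (0 : ℝ)).mul_const x).cosh.tendsto_slope_zero_right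
  refine tendsto_of_tendsto_of_tendsto_of_le_of_le' tendsto_const_nhds cosh_slope ?_ ?_
  · filter_upwards [self_mem_nhdsWithin] with b (hb : 0 < b)
    rw [sub_nonneg, le_div_iff₀ (sinhDiv_pos hb x), inv_mul_le_iff₀ hb]
    exact sinhDiv_le_mul_cosh hb x
  · filter_upwards [self_mem_nhdsWithin] with b (hb : 0 < b)
    rw [mul_sub, mul_one, inv_mul_eq_div]
    gcongr
    exact le_sinhDiv hb x

section LogSinhEnergy

variable {ι : Type*}

theorem posSemidef_inv_sinhDiv_sub [Finite ι] {b : ℝ} (hb : 0 < b) (x : ι → ℝ) :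
    (Matrix.of fun i j => (sinhDiv b (x i - x j))⁻¹).PosSemidef := by
  have factor_eq (k : ℕ) (i j : ι) : b * (x i - x j) / (Real.pi * (k + 1)) =
      b / (Real.pi * (k + 1)) * x i - b / (Real.pi * (k + 1)) * x j := by ring
  refine posSemidef_of_tendsto (l := atTop) (M := fun n => b⁻¹ • Matrix.of fun i j =>
    ∏ k ∈ range n, (1 + (b * (x i - x j) / (Real.pi * (k + 1))) ^ 2)⁻¹)
    (fun n => ?_) fun i j => ?_
  · simp only [factor_eq]
    exact (posSemidef_of_prod _ fun k _ => posSemidef_inv_one_add_sub_sq _).smul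
      (inv_nonneg.2 hb.le)
  · simpa [mul_comm] using
      (tendsto_sinhDiv_prod b (x i - x j)).inv₀ (sinhDiv_pos hb _).ne'

variable [Fintype ι]

/-- The quadratic form of the matrix `-log (sinhDiv t (x i - x j))` at a fixed vector `c`, as a
function of the scale `t`. For vectors `c` with coordinate sum zero it is convex and monotone on
the positive half-line, so the Tomić–Weyl inequality applies to it. -/
noncomputable def logSinhEnergy (x c : ι → ℝ) (t : ℝ) : ℝ :=
  -∑ i, ∑ j, c i * c j * Real.log (sinhDiv t (x i - x j))

/-- The derivative of `logSinhEnergy` in the scale `t > 0`. -/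
noncomputable def logSinhEnergyDeriv (x c : ι → ℝ) (t : ℝ) : ℝ :=
  -∑ i, ∑ j, c i * c j * (Real.cosh (t * (x i - x j)) / sinhDiv t (x i - x j))

variable (x c : ι → ℝ) {t : ℝ}

theorem hasDerivAt_logSinhEnergy (ht : 0 < t) :
    HasDerivAt (logSinhEnergy x c) (logSinhEnergyDeriv x c t) t :=
  (HasDerivAt.fun_sum fun _ _ => HasDerivAt.fun_sum fun _ _ =>
    (hasDerivAt_log_sinhDiv ht _).const_mul _).fun_neg

theorem hasDerivAt_logSinhEnergyDeriv (ht : 0 < t) :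
    HasDerivAt (logSinhEnergyDeriv x c)
      (∑ i, ∑ j, c i * c j * (sinhDiv t (x i - x j))⁻¹ ^ 2) t := by
  simpa only [mul_neg, sum_neg_distrib, neg_neg] using!
    (HasDerivAt.fun_sum fun i (_ : i ∈ Finset.univ) => HasDerivAt.fun_sum
      fun j (_ : j ∈ Finset.univ) =>
        (hasDerivAt_cosh_div_sinhDiv ht (x i - x j)).const_mul (c i * c j)).fun_neg

theorem monotoneOn_logSinhEnergyDeriv : MonotoneOn (logSinhEnergyDeriv x c) (Ioi 0) := by
  refine monotoneOn_of_hasDerivWithinAt_nonneg (convex_Ioi 0)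
    (fun t ht => (hasDerivAt_logSinhEnergyDeriv x c ht).continuousAt.continuousWithinAt)
    (fun t ht => (hasDerivAt_logSinhEnergyDeriv x c (interior_subset ht)).hasDerivWithinAt)
    fun t ht => ?_
  have posSemidef_inv := posSemidef_inv_sinhDiv_sub (interior_subset ht) x
  simpa only [sq, Matrix.hadamard_apply, Matrix.of_apply] using 
    (posSemidef_iff_isSymm_and_sum_mul_nonneg.1 (posSemidef_inv.hadamard posSemidef_inv)).2 c

theorem convexOn_logSinhEnergy : ConvexOn ℝ (Ioi 0) (logSinhEnergy x c) := by
  have hderiv {t : ℝ} (ht : 0 < t) := hasDerivAt_logSinhEnergy x c ht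
  refine MonotoneOn.convexOn_of_deriv (convex_Ioi 0)
    (fun t ht => (hderiv ht).continuousAt.continuousWithinAt)
    (fun t ht => (hderiv (interior_subset ht)).differentiableAt.differentiableWithinAt) ?_
  rw [interior_Ioi]
  exact (monotoneOn_logSinhEnergyDeriv x c).congr fun t ht => (hderiv ht).deriv.symm

variable {c}

theorem tendsto_logSinhEnergyDeriv_zero (hc : ∑ i, c i = 0) :
    Tendsto (logSinhEnergyDeriv x c) (𝓝[>] 0) (𝓝 0) := by
  have eq_sub_inv (t : ℝ) : logSinhEnergyDeriv x c t = -∑ i, ∑ j, c i * c j *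
      (Real.cosh (t * (x i - x j)) / sinhDiv t (x i - x j) - t⁻¹) := by
    simp only [logSinhEnergyDeriv, mul_sub, sum_sub_distrib, ← sum_mul, ← mul_sum, hc, mul_zero,
      zero_mul, sub_zero]
  simp only [funext eq_sub_inv]
  simpa using (tendsto_finsetSum univ fun i _ => tendsto_finsetSum univ fun j _ =>
    (tendsto_cosh_div_sinhDiv_sub_inv (x i - x j)).const_mul (c i * c j)).neg

theorem logSinhEnergyDeriv_nonneg (hc : ∑ i, c i = 0) (ht : 0 < t) :
    0 ≤ logSinhEnergyDeriv x c t := by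
  refine le_of_tendsto (tendsto_logSinhEnergyDeriv_zero x hc) ?_
  filter_upwards [Ioo_mem_nhdsGT ht] with s hs
  exact monotoneOn_logSinhEnergyDeriv x c hs.1 ht hs.2.le

theorem monotoneOn_logSinhEnergy (hc : ∑ i, c i = 0) :
    MonotoneOn (logSinhEnergy x c) (Ioi 0) :=
  monotoneOn_of_hasDerivWithinAt_nonneg (convex_Ioi 0)
    (fun _ ht => (hasDerivAt_logSinhEnergy x c ht).continuousAt.continuousWithinAt)
    (fun _ ht => (hasDerivAt_logSinhEnergy x c (interior_subset ht)).hasDerivWithinAt)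
    fun _ ht => logSinhEnergyDeriv_nonneg x hc (interior_subset ht)

end LogSinhEnergy

section SinhProd

variable {n : ℕ} {a b : Fin n → ℝ}

theorem sinhProd_eq_prod_sinhDiv (a b : Fin n → ℝ) (x : ℝ) :
    sinhProd a b x = ∏ k, sinhDiv (a k) x / sinhDiv (b k) x := by
  simp only [sinhProd, sinhDiv]
  split_ifs with hx
  · rfl
  · exact prod_congr rfl fun k _ => (div_div_div_cancel_right₀ hx _ _).symm

theorem sinhProd_pos (ha : ∀ i, 0 < a i) (hb : ∀ i, 0 < b i) (x : ℝ) : 0 < sinhProd a b x := by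
  rw [sinhProd_eq_prod_sinhDiv]
  exact prod_pos fun k _ => div_pos (sinhDiv_pos (ha k) x) (sinhDiv_pos (hb k) x)

theorem sinhProd_neg (a b : Fin n → ℝ) (x : ℝ) : sinhProd a b (-x) = sinhProd a b x := by
  simp only [sinhProd_eq_prod_sinhDiv, sinhDiv_neg]

theorem log_sinhProd (ha : ∀ i, 0 < a i) (hb : ∀ i, 0 < b i) (x : ℝ) :
    Real.log (sinhProd a b x) =
      ∑ k, (Real.log (sinhDiv (a k) x) - Real.log (sinhDiv (b k) x)) := by
  have ne_zero {t : ℝ} (ht : 0 < t) : sinhDiv t x ≠ 0 := (sinhDiv_pos ht x).ne'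
  rw [sinhProd_eq_prod_sinhDiv,
    Real.log_prod fun k _ => div_ne_zero (ne_zero (ha k)) (ne_zero (hb k))]
  exact sum_congr rfl fun k _ => Real.log_div (ne_zero (ha k)) (ne_zero (hb k))

theorem sum_mul_log_sinhProd_eq {ι : Type*} [Fintype ι] (ha : ∀ i, 0 < a i) (hb : ∀ i, 0 < b i)
    (x c : ι → ℝ) :
    ∑ i, ∑ j, c i * c j * Real.log (sinhProd a b (x i - x j)) =
      ∑ k, logSinhEnergy x c (b k) - ∑ k, logSinhEnergy x c (a k) := by
  simp only [log_sinhProd ha hb, logSinhEnergy, mul_sum, mul_sub, sum_sub_distrib, sum_neg_distrib]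
  rw [sub_neg_eq_add, neg_add_eq_sub]
  congr 1 <;> simp only [sum_comm (s := (univ : Finset ι)) (t := (univ : Finset (Fin n)))]

end SinhProd

theorem sinhProd_infdiv_of_weak_submajorization {n : ℕ} (a b : Fin n → ℝ)
    (ha : ∀ i, 0 < a i) (hb : ∀ i, 0 < b i)
    (hmaj : IsWeaklySubmajorizedBy a b) :
    IsInfDivFun (sinhProd a b) := by
  refine isInfDivFun_of_isCondPosSemidef_log (sinhProd_pos ha hb) fun m x =>
    ⟨Matrix.IsSymm.ext fun i j => ?_, fun c hc => ?_⟩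
  · rw [Matrix.of_apply, Matrix.of_apply, ← neg_sub, sinhProd_neg]
  have energy_le : ∑ k, logSinhEnergy x c (a k) ≤ ∑ k, logSinhEnergy x c (b k) :=
    hmaj.sum_le_sum (fun i => interior_Ioi.ge (ha i)) hb (convexOn_logSinhEnergy x c)
      (monotoneOn_logSinhEnergy x hc)
  simpa only [Matrix.of_apply, sum_mul_log_sinhProd_eq ha hb, sub_nonneg] using energy_le
end
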